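/- Let E be a real inner product space and let C ⊆ E be a nonempty bounded set containing the origin. Then for every z ∈ E, the gauge of the polar of C equals the support function of C: γ_{C°}(z) = sup_{x ∈ C} ⟨x, z⟩. -/

import Mathlib

/-! Let `S` be the supremum of `⟪x, z⟫` over `x ∈ C`. For `r > 0`, the vector `r⁻¹ • z` lies in
the polar of `C` exactly when `⟪x, z⟫ ≤ r` for all `x ∈ C`, that is, when `S ≤ r`. Hence the gauge
of the polar at `z` is the infimum of `{r > 0 | S ≤ r}`, which is `S` because `0 ≤ S`. -/

open RealInnerProductSpace

/-- **Gauge of the polar equals the support function.**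
For a nonempty bounded set `C` containing the origin in a real inner product
space, the gauge of the polar set `C° = {v | ∀ x ∈ C, ⟪x, v⟫ ≤ 1}` at `z`
equals the support function `sup_{x ∈ C} ⟪x, z⟫`. -/
theorem gauge_polar_eq_suppFunction {E : Type*}
    [NormedAddCommGroup E] [InnerProductSpace ℝ E]
    (C : Set E) (hne : C.Nonempty) (hbdd : Bornology.IsBounded C)
    (h0 : (0 : E) ∈ C) (z : E) :
    gauge {v : E | ∀ x ∈ C, ⟪x, v⟫ ≤ 1} z = sSup ((fun x => ⟪x, z⟫) '' C) := by
  -- Boundedness of `C` makes the support function finite, so that `sSup` is not a junk value.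
  have hb : BddAbove ((fun x => ⟪x, z⟫) '' C) := by
    obtain ⟨M, hM⟩ := hbdd.exists_norm_le
    refine ⟨M * ‖z‖, ?_⟩
    rintro _ ⟨x, hx, rfl⟩
    exact (real_inner_le_norm x z).trans
      (mul_le_mul_of_nonneg_right (hM x hx) (norm_nonneg z))
  -- Since `0 ∈ C`, the support function is nonnegative.
  have hS : 0 ≤ sSup ((fun x => ⟪x, z⟫) '' C) :=
    le_csSup hb ⟨0, h0, inner_zero_left z⟩
  have key : ∀ r : ℝ, 0 < r →
      (r⁻¹ • z ∈ {v : E | ∀ x ∈ C, ⟪x, v⟫ ≤ 1} ↔ sSup ((fun x => ⟪x, z⟫) '' C) ≤ r) := by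
    intro r hr
    rw [csSup_le_iff hb (hne.image _), Set.forall_mem_image]
    refine forall₂_congr fun x _ => ?_
    rw [real_inner_smul_right, inv_mul_le_iff₀ hr, mul_one]
  rw [gauge_def']
  apply le_antisymm
  · refine le_of_forall_gt_imp_ge_of_dense fun r hr => ?_
    have hr0 : 0 < r := hS.trans_lt hr
    exact csInf_le ⟨0, fun _ h => h.1.le⟩ ⟨hr0, (key r hr0).2 hr.le⟩
  · -- The set of admissible scales is nonempty because the supremum is finite.
    refine le_csInf ⟨sSup ((fun x => ⟪x, z⟫) '' C) + 1, ?_, ?_⟩ fun r hr => (key r hr.1).1 hr.2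
    · exact Set.mem_Ioi.2 (by linarith)
    · exact (key _ (by linarith)).2 (by linarith)
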